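/- arXiv:2007.13074 — 2 statements merged into one kernel-verified Lean document; each statement's English description precedes it below -/
import Mathlib

section
/- Let f = (f₁, f₂, f₃) : ℝ³ → ℝ³ be continuously differentiable with (∇ × f)(p) ≠ 0 for some p ∈ ℝ³, and let g : ℝ³ → ℝ be continuous. Then for every a, b ∈ ℝ⁴ there exist T > 0 and a continuously differentiable curve γ : [0, T] → ℝ³ with γ(0) = (a₁, a₂, a₃), γ(T) = (b₁, b₂, b₃) and b₄ − a₄ = ∫₀ᵀ ( g(γ(t)) + ⟨f(γ(t)), γ′(t)⟩ ) dt; i.e., the nonholonomic integrator on ℝ³ with drift g is controllable. -/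
/-- Partial derivative of a scalar function on ℝ³ in the `j`-th coordinate direction. -/
noncomputable def pderiv3 (g : (Fin 3 → ℝ) → ℝ) (j : Fin 3) (p : Fin 3 → ℝ) : ℝ :=
  fderiv ℝ g p (Pi.single j 1)

/-- The curl of a vector field on ℝ³. -/
noncomputable def curl3 (f : (Fin 3 → ℝ) → (Fin 3 → ℝ)) (p : Fin 3 → ℝ) : Fin 3 → ℝ :=
  ![pderiv3 (fun x => f x 2) 1 p - pderiv3 (fun x => f x 1) 2 p,
    pderiv3 (fun x => f x 0) 2 p - pderiv3 (fun x => f x 2) 0 p,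
    pderiv3 (fun x => f x 1) 0 p - pderiv3 (fun x => f x 0) 1 p]

open intervalIntegral in
lemma aux_circ (φ ψ : (Fin 3 → ℝ) → ℝ) (p u w : Fin 3 → ℝ) (hφ : ContDiff ℝ 1 φ)
    (hψ : ContDiff ℝ 1 ψ) (hpos : 0 < fderiv ℝ ψ p u - fderiv ℝ φ p w) :
    ∃ ε : ℝ, 0 < ε ∧ 0 < ∫ θ in (0:ℝ)..(2 * Real.pi),
      (-Real.sin θ * φ (p + ε • (Real.cos θ • u + Real.sin θ • w)) +
        Real.cos θ * ψ (p + ε • (Real.cos θ • u + Real.sin θ • w))) := by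
  set D := fderiv ℝ ψ p u - fderiv ℝ φ p w with hD
  set M : ℝ := ‖u‖ + ‖w‖ + 1 with hM
  have hMpos : 0 < M := by positivity
  have hη : 0 < D / (8 * M) := by positivity
  have h1 := (hφ.differentiable one_ne_zero p).hasFDerivAt.isLittleO.def hη
  have h2 := (hψ.differentiable one_ne_zero p).hasFDerivAt.isLittleO.def hη
  obtain ⟨δ, hδ, hb⟩ := Metric.eventually_nhds_iff.1 (h1.and h2)
  have hcφ := hφ.continuous
  have hcψ := hψ.continuous
  refine ⟨δ / (2 * M), by positivity, ?_⟩
  set ε := δ / (2 * M) with hε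
  have hεpos : 0 < ε := by positivity
  have hv : ∀ θ : ℝ, ‖Real.cos θ • u + Real.sin θ • w‖ ≤ M := by
    intro θ
    have a1 := Real.abs_cos_le_one θ
    have a2 := Real.abs_sin_le_one θ
    calc _ ≤ ‖Real.cos θ • u‖ + ‖Real.sin θ • w‖ := norm_add_le _ _
      _ = |Real.cos θ| * ‖u‖ + |Real.sin θ| * ‖w‖ := by rw [norm_smul, norm_smul]; rfl
      _ ≤ 1 * ‖u‖ + 1 * ‖w‖ := by gcongr
      _ ≤ M := by rw [hM]; linarith
  set lin : ℝ → ℝ := fun θ => -Real.sin θ * (φ p + ε * (Real.cos θ * fderiv ℝ φ p u + Real.sin θ * fderiv ℝ φ p w)) +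
        Real.cos θ * (ψ p + ε * (Real.cos θ * fderiv ℝ ψ p u + Real.sin θ * fderiv ℝ ψ p w)) with hlin
  have hlinc : Continuous lin := by rw [hlin]; fun_prop
  have hlinI : ∫ θ in (0:ℝ)..(2 * Real.pi), lin θ = ε * Real.pi * D := by
    have e : lin = fun θ => (-φ p) * Real.sin θ + ψ p * Real.cos θ + (ε * (fderiv ℝ ψ p w - fderiv ℝ φ p u)) * (Real.sin θ * Real.cos θ)
        + (-(ε * fderiv ℝ φ p w)) * Real.sin θ ^ 2 + (ε * fderiv ℝ ψ p u) * Real.cos θ ^ 2 := by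
      funext θ; rw [hlin]; ring
    rw [e]
    have i1 : ∀ F : ℝ → ℝ, Continuous F → IntervalIntegrable F MeasureTheory.volume 0 (2 * Real.pi) :=
      fun F hF => hF.intervalIntegrable _ _
    rw [integral_add (i1 _ (by fun_prop)) (i1 _ (by fun_prop)),
      integral_add (i1 _ (by fun_prop)) (i1 _ (by fun_prop)),
      integral_add (i1 _ (by fun_prop)) (i1 _ (by fun_prop)),
      integral_add (i1 _ (by fun_prop)) (i1 _ (by fun_prop))]
    simp only [integral_const_mul, integral_sin, integral_cos, integral_sin_mul_cos₁, integral_sin_sq, integral_cos_sq]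
    simp
    rw [hD]; ring
  set act : ℝ → ℝ := fun θ => (-Real.sin θ * φ (p + ε • (Real.cos θ • u + Real.sin θ • w)) +
        Real.cos θ * ψ (p + ε • (Real.cos θ • u + Real.sin θ • w))) with hact
  have hactc : Continuous act := by rw [hact]; fun_prop
  have hdiff : ∀ θ, ‖act θ - lin θ‖ ≤ ε * D / 4 := by
    intro θ
    set v := Real.cos θ • u + Real.sin θ • w with hvd
    have hvM : ‖v‖ ≤ M := hv θ
    have hn : ‖ε • v‖ ≤ ε * M := by
      rw [norm_smul, Real.norm_of_nonneg hεpos.le]; gcongr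
    have hd : dist (p + ε • v) p < δ := by
      rw [dist_eq_norm, add_sub_cancel_left]
      have : ε * M = δ / 2 := by rw [hε]; field_simp
      linarith
    obtain ⟨b1, b2⟩ := hb hd
    rw [add_sub_cancel_left] at b1 b2
    have hk : D / (8 * M) * ‖ε • v‖ ≤ ε * D / 8 := by
      calc _ ≤ D / (8 * M) * (ε * M) := by gcongr
        _ = _ := by field_simp
    have b1' := b1.trans hk
    have b2' := b2.trans hk
    have e : act θ - lin θ = -Real.sin θ * (φ (p + ε • v) - φ p - fderiv ℝ φ p (ε • v)) +
        Real.cos θ * (ψ (p + ε • v) - ψ p - fderiv ℝ ψ p (ε • v)) := by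
      simp only [hact, hlin, hvd, map_smul, map_add, smul_eq_mul]; ring
    rw [e]
    have a1 := Real.abs_cos_le_one θ
    have a2 := Real.abs_sin_le_one θ
    refine (norm_add_le _ _).trans ?_
    rw [norm_mul, norm_mul, norm_neg, Real.norm_eq_abs (Real.sin θ), Real.norm_eq_abs (Real.cos θ)]
    have c1 := mul_le_mul a2 b1' (norm_nonneg _) zero_le_one
    have c2 := mul_le_mul a1 b2' (norm_nonneg _) zero_le_one
    linarith
  have hI := intervalIntegral.norm_integral_le_of_norm_le_const (a := 0) (b := 2 * Real.pi)
    (f := fun θ => act θ - lin θ) (fun θ _ => hdiff θ)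
  rw [integral_sub (hactc.intervalIntegrable _ _) (hlinc.intervalIntegrable _ _), hlinI,
    Real.norm_eq_abs, abs_le, sub_zero, abs_of_pos Real.two_pi_pos] at hI
  have : 0 < ε * D * Real.pi := by have := Real.pi_pos; positivity
  linarith [hI.1]

lemma aux_sigma : ∃ σ : ℝ → ℝ, ContDiff ℝ 1 σ ∧ (∀ t ≤ 0, σ t = 0) ∧ (∀ t, 1 ≤ t → σ t = 1) ∧
    (∀ t, t ≤ 0 → deriv σ t = 0) ∧ (∀ t, 1 ≤ t → deriv σ t = 0) := by
  refine ⟨Real.smoothTransition, Real.smoothTransition.contDiff,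
    fun t ht => Real.smoothTransition.zero_of_nonpos ht,
    fun t ht => Real.smoothTransition.one_of_one_le ht, fun t ht => ?_, fun t ht => ?_⟩
  · refine IsLocalMin.deriv_eq_zero (Filter.Eventually.of_forall fun x => ?_)
    rw [Real.smoothTransition.zero_of_nonpos ht]
    exact Real.smoothTransition.nonneg x
  · refine IsLocalMax.deriv_eq_zero (Filter.Eventually.of_forall fun x => ?_)
    rw [Real.smoothTransition.one_of_one_le ht]
    exact Real.smoothTransition.le_one x

open Matrix in
lemma aux_main (f : (Fin 3 → ℝ) → (Fin 3 → ℝ)) (hf : Continuous f)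
    (g : (Fin 3 → ℝ) → ℝ) (hg : Continuous g) (C C' : ℝ → (Fin 3 → ℝ))
    (hC : ∀ θ, HasDerivAt C (C' θ) θ) (hC' : Continuous C')
    (hCp : Function.Periodic C (2 * Real.pi)) (hCp' : Function.Periodic C' (2 * Real.pi))
    (hpos : 0 < ∫ θ in (0:ℝ)..(2 * Real.pi), f (C θ) ⬝ᵥ C' θ)
    (A B : Fin 3 → ℝ) (y : ℝ) :
    ∃ γ : ℝ → (Fin 3 → ℝ), ContDiff ℝ 1 γ ∧ γ 0 = A ∧ γ 3 = B ∧
      (∫ t in (0:ℝ)..3, (g (γ t) + f (γ t) ⬝ᵥ deriv γ t)) = y := by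
  obtain ⟨σ, hσ, h0, h1, hd0, hd1⟩ := aux_sigma
  have hσc := hσ.continuous
  have hσ'c : Continuous (deriv σ) := hσ.continuous_deriv le_rfl
  have hσd : ∀ t, HasDerivAt σ (deriv σ t) t :=
    fun t => (hσ.differentiable one_ne_zero t).hasDerivAt
  have hCc : Continuous C := continuous_iff_continuousAt.2 fun θ => (hC θ).continuousAt
  have hC1 : ContDiff ℝ 1 C := by
    rw [contDiff_one_iff_deriv]
    refine ⟨fun θ => (hC θ).differentiableAt, ?_⟩
    rw [show deriv C = C' from funext fun θ => (hC θ).deriv]; exact hC'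
  set P : ℝ → (Fin 3 → ℝ) → (Fin 3 → ℝ) := fun t z => A + σ t • (z - A) + σ (t - 2) • (B - z) with hP
  set V : ℝ → (Fin 3 → ℝ) → (Fin 3 → ℝ) := fun t z => deriv σ t • (z - A) + deriv σ (t - 2) • (B - z) with hV
  set Φ : ℝ × (Fin 3 → ℝ) → ℝ := fun x => g (P x.1 x.2) + f (P x.1 x.2) ⬝ᵥ V x.1 x.2 with hΦ
  have hPc : Continuous fun x : ℝ × (Fin 3 → ℝ) => P x.1 x.2 := by rw [hP]; fun_prop
  have hVc : Continuous fun x : ℝ × (Fin 3 → ℝ) => V x.1 x.2 := by rw [hV]; fun_prop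
  have hΦc : Continuous Φ := (hg.comp hPc).add ((hf.comp hPc).dotProduct hVc)
  set γ : ℝ → ℝ → (Fin 3 → ℝ) := fun s t => P t (C (s * σ (t - 1))) with hγ
  have hγs : ∀ s, ContDiff ℝ 1 (γ s) := by
    intro s; rw [hγ, hP]
    have e1 : ContDiff ℝ 1 fun t : ℝ => C (s * σ (t - 1)) :=
      hC1.comp (contDiff_const.mul (hσ.comp (contDiff_id.sub contDiff_const)))
    have e2 : ContDiff ℝ 1 fun t : ℝ => σ (t - 2) := hσ.comp (contDiff_id.sub contDiff_const)
    exact (contDiff_const.add (hσ.smul (e1.sub contDiff_const))).add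
      (e2.smul (contDiff_const.sub e1))
  set h : ℝ → ℝ := fun θ => f (C θ) ⬝ᵥ C' θ with hh
  have hhc : Continuous h := (hf.comp hCc).dotProduct hC'
  have hhp : Function.Periodic h (2 * Real.pi) := by
    intro θ; simp only [hh, hCp θ, hCp' θ]
  have hσsd : ∀ c t, HasDerivAt (fun t => σ (t - c)) (deriv σ (t - c)) t := fun c t => by
    simpa using (hσd (t - c)).comp_sub_const t c
  have hder : ∀ s t, deriv (γ s) t = V t (C (s * σ (t - 1))) +
      (s * deriv σ (t - 1)) • ((σ t - σ (t - 2)) • C' (s * σ (t - 1))) := by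
    intro s t
    have e1 : HasDerivAt (fun t => C (s * σ (t - 1))) ((s * deriv σ (t - 1)) • C' (s * σ (t - 1))) t :=
      (hC (s * σ (t - 1))).scomp t ((hσsd 1 t).const_mul s)
    have := (((hσd t).smul (e1.sub_const A)).const_add A).add ((hσsd 2 t).smul (e1.const_sub B))
    have e2 := HasDerivAt.deriv (f := γ s) this
    rw [e2, hV]
    simp only [smul_sub, smul_neg, sub_smul, smul_smul]
    module
  have key : ∀ s t, g (γ s t) + f (γ s t) ⬝ᵥ deriv (γ s) t =
      Φ (t, C (s * σ (t - 1))) + h (s * σ (t - 1)) * (s * deriv σ (t - 1)) := by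
    intro s t
    rw [hder, dotProduct_add, dotProduct_smul, dotProduct_smul]
    by_cases ht : deriv σ (t - 1) = 0
    · simp [ht, hΦ, hγ]
    · have t1 : 1 ≤ t := by
        by_contra hc; exact ht (hd0 _ (by linarith))
      have t2 : t ≤ 2 := by
        by_contra hc; exact ht (hd1 _ (by linarith))
      have e : γ s t = C (s * σ (t - 1)) := by
        simp [hγ, hP, h1 t t1, h0 (t - 2) (by linarith)]
      have e3 : Φ (t, C (s * σ (t - 1))) = g (γ s t) + f (γ s t) ⬝ᵥ V t (C (s * σ (t - 1))) := rfl
      rw [e3, e, h1 t t1, h0 (t - 2) (by linarith)]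
      simp only [hh, smul_eq_mul]
      ring
  have hsub : ∀ s, ∫ t in (0:ℝ)..3, h (s * σ (t - 1)) * (s * deriv σ (t - 1)) = ∫ θ in (0:ℝ)..s, h θ := by
    intro s
    have := intervalIntegral.integral_comp_mul_deriv (a := 0) (b := 3)
      (f := fun t => s * σ (t - 1)) (f' := fun t => s * deriv σ (t - 1)) (g := h)
      (fun t _ => (hσsd 1 t).const_mul s) (by fun_prop) hhc
    simp only [Function.comp_def] at this
    rw [this, h0 (0 - 1) (by norm_num), h1 (3 - 1) (by norm_num), mul_zero, mul_one]
  set R : ℝ → ℝ := fun s => ∫ t in (0:ℝ)..3, Φ (t, C (s * σ (t - 1))) with hR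
  have hRc : Continuous R := by
    apply intervalIntegral.continuous_parametric_intervalIntegral_of_continuous'
    unfold Function.uncurry
    fun_prop
  obtain ⟨M, hM⟩ : ∃ M, ∀ s, |R s| ≤ M := by
    have hK : IsCompact (C '' Set.Icc 0 (2 * Real.pi)) := isCompact_Icc.image hCc
    obtain ⟨M, hM⟩ := ((isCompact_Icc (a := (0:ℝ)) (b := 3)).prod hK).exists_bound_of_continuousOn
      hΦc.continuousOn
    refine ⟨M * |3 - 0|, fun s => ?_⟩
    rw [hR, ← Real.norm_eq_abs]
    refine intervalIntegral.norm_integral_le_of_norm_le_const (E := ℝ) fun t ht => ?_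
    rw [Set.uIoc_of_le (by norm_num)] at ht
    refine hM _ ⟨⟨ht.1.le, ht.2⟩, ?_⟩
    obtain ⟨x, hx, hxe⟩ := hCp.exists_mem_Ico₀ Real.two_pi_pos (s * σ (t - 1))
    exact ⟨x, ⟨hx.1, hx.2.le⟩, hxe.symm⟩
  set H : ℝ → ℝ := fun s => ∫ θ in (0:ℝ)..s, h θ with hH
  have hHc : Continuous H :=
    intervalIntegral.continuous_primitive (fun a b => hhc.intervalIntegrable a b) 0
  have hHt : Filter.Tendsto H Filter.atTop Filter.atTop :=
    hhp.tendsto_atTop_intervalIntegral_of_pos hpos Real.two_pi_pos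
  have hHb : Filter.Tendsto H Filter.atBot Filter.atBot :=
    hhp.tendsto_atBot_intervalIntegral_of_pos hpos Real.two_pi_pos
  have hsurj : Function.Surjective fun s => R s + H s := by
    refine (hRc.add hHc).surjective ?_ ?_
    · exact Filter.tendsto_atTop_add_left_of_le _ (-M) (fun s => (abs_le.1 (hM s)).1) hHt
    · exact Filter.tendsto_atBot_add_left_of_ge _ M (fun s => (abs_le.1 (hM s)).2) hHb
  obtain ⟨s, hs⟩ := hsurj y
  refine ⟨γ s, hγs s, ?_, ?_, ?_⟩
  · simp [hγ, hP, h0 0 le_rfl, h0 (-2) (by norm_num)]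
  · simp [hγ, hP, h1 3 (by norm_num), h1 (3 - 2) (by norm_num)]
  · simp only [key]
    rw [intervalIntegral.integral_add, hsub]
    · exact hs
    · exact Continuous.intervalIntegrable (by fun_prop) _ _
    · exact Continuous.intervalIntegrable (by fun_prop) _ _

lemma aux_curl (f : (Fin 3 → ℝ) → (Fin 3 → ℝ)) (p : Fin 3 → ℝ) (h : curl3 f p ≠ 0) :
    ∃ i j : Fin 3, 0 < pderiv3 (fun x => f x j) i p - pderiv3 (fun x => f x i) j p := by
  by_contra! hc
  apply h
  have e : ∀ i j, pderiv3 (fun x => f x j) i p - pderiv3 (fun x => f x i) j p = 0 := fun i j => by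
    have := hc i j
    have := hc j i
    linarith
  funext k
  fin_cases k
  · exact e 1 2
  · exact e 2 0
  · exact e 0 1


theorem controllability_nonholonomic_integrator_with_drift
    (f : (Fin 3 → ℝ) → (Fin 3 → ℝ)) (hf : ContDiff ℝ 1 f)
    (hcurl : ∃ p : Fin 3 → ℝ, curl3 f p ≠ 0)
    (g : (Fin 3 → ℝ) → ℝ) (hg : Continuous g) :
    ∀ a b : Fin 4 → ℝ, ∃ T : ℝ, 0 < T ∧ ∃ γ : ℝ → (Fin 3 → ℝ),
      ContDiff ℝ 1 γ ∧ (∀ i : Fin 3, γ 0 i = a i.castSucc) ∧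
      (∀ i : Fin 3, γ T i = b i.castSucc) ∧
      b 3 - a 3 =
        ∫ t in (0:ℝ)..T, (g (γ t) + ∑ i : Fin 3, f (γ t) i * deriv γ t i) := by
  intro a b
  obtain ⟨p, hp⟩ := hcurl
  obtain ⟨i, j, hij⟩ := aux_curl f p hp
  have hfi : ∀ k, ContDiff ℝ 1 fun x => f x k := fun k => contDiff_pi.1 hf k
  obtain ⟨ε, hε, hI⟩ := aux_circ (fun x => f x i) (fun x => f x j) p (Pi.single i 1) (Pi.single j 1)
    (hfi i) (hfi j) hij
  set u : Fin 3 → ℝ := Pi.single i 1 with hu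
  set w : Fin 3 → ℝ := Pi.single j 1 with hw
  obtain ⟨γ, hγ, hγ0, hγ3, hγI⟩ := aux_main f hf.continuous g hg
    (fun θ => p + ε • (Real.cos θ • u + Real.sin θ • w))
    (fun θ => ε • ((-Real.sin θ) • u + Real.cos θ • w))
    (fun θ => ((((Real.hasDerivAt_cos θ).smul_const u).add
      ((Real.hasDerivAt_sin θ).smul_const w)).const_smul ε).const_add p)
    (by fun_prop) (fun θ => by simp) (fun θ => by simp)
    (by
      have : 0 < ε * _ := mul_pos hε hI
      rw [← intervalIntegral.integral_const_mul] at this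
      refine this.trans_eq (intervalIntegral.integral_congr fun θ _ => ?_)
      simp [hu, hw, dotProduct_add, dotProduct_smul]
      ring)
    (fun k => a k.castSucc) (fun k => b k.castSucc) (b 3 - a 3)
  refine ⟨3, by norm_num, γ, hγ, fun k => by rw [hγ0], fun k => by rw [hγ3], ?_⟩
  rw [← hγI]
  rfl
end

section
/- Let c₁, c₂ ∈ ℝ and define x₁(t) = (c₁/(2π)) sin(2πt) and x₂(t) = (c₂/(2π)) (1 − cos(2πt)). Then x₁(1) = 0, x₂(1) = 0, and ∫₀¹ ( x₂(t)² · c₁ cos(2πt) − x₁(t)² · c₂ sin(2πt) ) dt = −c₁c₂²/(4π²). Consequently, the inputs u₁(t) = c₁ cos(2πt), u₂(t) = c₂ sin(2πt) steer the system ẋ₁ = u₁, ẋ₂ = u₂, ẋ₃ = x₂²u₁ − x₁²u₂ from the origin at t = 0 to (0, 0, −c₁c₂²/(4π²)) at t = 1. -/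
open Real

theorem steering_planar_rigid_body_two_oscillators
    (c₁ c₂ : ℝ) (x₁ x₂ : ℝ → ℝ)
    (hx₁ : ∀ t, x₁ t = (c₁ / (2 * π)) * Real.sin (2 * π * t))
    (hx₂ : ∀ t, x₂ t = (c₂ / (2 * π)) * (1 - Real.cos (2 * π * t))) :
    x₁ 1 = 0 ∧ x₂ 1 = 0 ∧
    (∫ t in (0:ℝ)..1,
        ((x₂ t) ^ 2 * (c₁ * Real.cos (2 * π * t)) -
         (x₁ t) ^ 2 * (c₂ * Real.sin (2 * π * t)))) =
      -(c₁ * c₂ ^ 2) / (4 * π ^ 2) := by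
  have hπ : π ≠ 0 := Real.pi_ne_zero
  refine ⟨by simp [hx₁], by simp [hx₂], ?_⟩
  have hd : ∀ t ∈ Set.uIcc (0:ℝ) 1, HasDerivAt (fun t : ℝ =>
      c₁ * (c₂ / (2 * π)) ^ 2 / (2 * π) *
        (2 * Real.sin (2 * π * t) - 2 * π * t - Real.sin (2 * π * t) * Real.cos (2 * π * t)
          - Real.sin (2 * π * t) ^ 3 / 3)
      - c₂ * (c₁ / (2 * π)) ^ 2 / (2 * π) *
        (Real.cos (2 * π * t) ^ 3 / 3 - Real.cos (2 * π * t)))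
      ((x₂ t) ^ 2 * (c₁ * Real.cos (2 * π * t)) -
         (x₁ t) ^ 2 * (c₂ * Real.sin (2 * π * t))) t := by
    intro t _
    have hw : HasDerivAt (fun t : ℝ => 2 * π * t) (2 * π) t := by
      simpa using (hasDerivAt_id t).const_mul (2 * π)
    have hs := hw.sin
    have hc := hw.cos
    have h := (((((hs.const_mul 2).sub hw).sub (hs.mul hc)).sub
      ((hs.pow 3).div_const 3)).const_mul (c₁ * (c₂ / (2 * π)) ^ 2 / (2 * π))).sub
      ((((hc.pow 3).div_const 3).sub hc).const_mul (c₂ * (c₁ / (2 * π)) ^ 2 / (2 * π)))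
    refine h.congr_deriv ?_
    rw [hx₁, hx₂]
    have h1 := Real.sin_sq_add_cos_sq (2 * π * t)
    generalize Real.sin (2 * π * t) = s at *
    generalize Real.cos (2 * π * t) = c at *
    have h2 : s ^ 2 = 1 - c ^ 2 := by linarith
    field_simp
    norm_num
    ring_nf
    have h3 : s ^ 3 = s * (1 - c ^ 2) := by rw [← h2]; ring
    simp only [h3, h2]
    ring
  rw [intervalIntegral.integral_eq_sub_of_hasDerivAt hd]
  · simp
    field_simp
    ring
  · apply Continuous.intervalIntegrable
    simp only [hx₁, hx₂]
    fun_prop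
end
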